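/- arXiv:2507.04163 — 2 statements merged into one kernel-verified Lean document; each statement's English description precedes it below -/
import Mathlib

section
/- Under the stated model and sampling scheme, if the likelihood g_y is strictly positive on 𝒳×𝒵 and bounded (‖g_y‖_∞ < ∞), then for every p ≥ 1 there exists a finite constant C (one may take C = 𝒞_p·‖g_y‖_∞/π₀(l_y), where 𝒞_p depends only on p) that is independent of N, M and f, such that for every bounded measurable f : 𝒳 → ℝ, E[|π(f) − π^{N,M}(f)|^p]^{1/p} ≤ C·‖f‖_∞/√N. -/
open MeasureTheory ProbabilityTheory
open scoped ENNReal

noncomputable section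

/-- Joint law of one outer sample `X ~ π₀` together with `M` i.i.d. inner samples
`Z^{1}, …, Z^{M} ~ κ(X, ·)` (conditionally i.i.d. given `X`). -/
def nestedLawOne {𝒳 𝒵 : Type*} [MeasurableSpace 𝒳] [MeasurableSpace 𝒵]
    (π₀ : Measure 𝒳) (κ : Kernel 𝒳 𝒵) (M : ℕ) : Measure (𝒳 × (Fin M → 𝒵)) :=
  π₀.bind fun x => (Measure.dirac x).prod (Measure.pi fun _ : Fin M => κ x)

/-- Joint law of `N` i.i.d. outer samples `X¹, …, X^N ~ π₀`, each carrying its `M`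
conditionally i.i.d. inner samples `Z^{i,1}, …, Z^{i,M} ~ κ(Xⁱ, ·)`. -/
def nestedLaw {𝒳 𝒵 : Type*} [MeasurableSpace 𝒳] [MeasurableSpace 𝒵]
    (π₀ : Measure 𝒳) (κ : Kernel 𝒳 𝒵) (N M : ℕ) : Measure (Fin N → 𝒳 × (Fin M → 𝒵)) :=
  Measure.pi fun _ : Fin N => nestedLawOne π₀ κ M

/-- The approximate likelihood `l_y^M(xⁱ) = (1/M) ∑_j g_y(xⁱ, z^{i,j})` of one outer
sample together with its inner samples. -/
def likeM {𝒳 𝒵 : Type*} (g : 𝒳 × 𝒵 → ℝ) {M : ℕ} (s : 𝒳 × (Fin M → 𝒵)) : ℝ :=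
  (M : ℝ)⁻¹ * ∑ j, g (s.1, s.2 j)

/-- The self-normalised nested importance sampling estimator
`π^{N,M}(f) = ∑_i w^{i,M} f(xⁱ)` with `w^{i,M} = l_y^M(xⁱ) / ∑_j l_y^M(xʲ)`. -/
def nisEstimator {𝒳 𝒵 : Type*} (g : 𝒳 × 𝒵 → ℝ) (f : 𝒳 → ℝ) {N M : ℕ}
    (ω : Fin N → 𝒳 × (Fin M → 𝒵)) : ℝ :=
  (∑ i, likeM g (ω i) * f (ω i).1) / ∑ i, likeM g (ω i)

/-! Every pair `(Xⁱ, Z^{i,j})` has law `π₀ ⊗ₘ κ`, so the nested weight `l_y^M(Xⁱ)` is unbiased: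
the scheme is ordinary self-normalised importance sampling with bounded weights, on the space of
outer samples with their inner samples attached, and `M` plays no role in the bound. Let
`a = π₀(f l_y)` and `c = π₀(l_y)`, so that `π(f) = a / c`, and write `π^{N,M}(f) = U / V`, where
`E U = N a` and `E V = N c`. Since `|U / V| ≤ ‖f‖_∞`,

  `|a / c - U / V| ≤ (N c)⁻¹ (|U - N a| + ‖f‖_∞ |V - N c|)`,

and the centred sums `U - N a` and `V - N c` of bounded i.i.d. terms are sub-Gaussian by
Hoeffding's lemma, so that their `L^p` norms are of order `√N`. -/

section Subgaussian

variable {Ω : Type*} [MeasurableSpace Ω] {μ : Measure Ω}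

/-- The factor in the `L^p` norm bound `‖X‖_p ≤ subgaussianMomentConst p * √c` for a random
variable `X` with sub-Gaussian parameter `c`; the choice `t = √(p / c)` of the exponential
moment produces it. -/
def subgaussianMomentConst (p : ℝ) : ℝ :=
  2 ^ p⁻¹ * √(Real.exp 1 * p)

lemma subgaussianMomentConst_nonneg (p : ℝ) : 0 ≤ subgaussianMomentConst p := by
  unfold subgaussianMomentConst
  positivity

lemma subgaussianMomentConst_mul_sqrt_rpow {p : ℝ} (hp : 0 < p) (c : NNReal) :
    (subgaussianMomentConst p * √c) ^ p = 2 * √(Real.exp 1 * p * c) ^ p := by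
  rw [subgaussianMomentConst, mul_assoc, ← Real.sqrt_mul (by positivity),
    Real.mul_rpow (by positivity) (by positivity), Real.rpow_inv_rpow (by norm_num) hp.ne']

lemma integral_abs_rpow_le_mgf_add {X : Ω → ℝ} {t p : ℝ} (ht : 0 < t) (hp : 0 ≤ p)
    (h_pos : Integrable (fun ω => Real.exp (t * X ω)) μ)
    (h_neg : Integrable (fun ω => Real.exp (-t * X ω)) μ) :
    ∫ ω, |X ω| ^ p ∂μ ≤ (p / t) ^ p * (mgf X μ t + mgf X μ (-t)) := by
  have hpt (ω : Ω) : |X ω| ^ p ≤ (p / t) ^ p * (Real.exp (t * X ω) + Real.exp (-t * X ω)) := by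
    refine (rpow_abs_le_mul_max_exp_of_pos (X ω) hp ht).trans ?_
    gcongr
    exact max_le_add_of_nonneg (Real.exp_nonneg _) (Real.exp_nonneg _)
  calc ∫ ω, |X ω| ^ p ∂μ
      ≤ ∫ ω, (p / t) ^ p * (Real.exp (t * X ω) + Real.exp (-t * X ω)) ∂μ :=
        integral_mono_of_nonneg (ae_of_all _ fun ω => by positivity)
          ((h_pos.add h_neg).const_mul _) (ae_of_all _ hpt)
    _ = (p / t) ^ p * (mgf X μ t + mgf X μ (-t)) := by
        rw [integral_const_mul, integral_add h_pos h_neg, mgf, mgf]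

lemma integral_abs_rpow_le_of_hasSubgaussianMGF {X : Ω → ℝ} {c : NNReal} {p : ℝ}
    (hX : HasSubgaussianMGF X c μ) (hp : 0 < p) :
    ∫ ω, |X ω| ^ p ∂μ ≤ (subgaussianMomentConst p * √c) ^ p := by
  rw [subgaussianMomentConst_mul_sqrt_rpow hp]
  rcases eq_or_ne c 0 with rfl | hc
  · have hX0 : ∫ ω, |X ω| ^ p ∂μ = 0 := integral_eq_zero_of_ae <| by
      filter_upwards [hX.ae_eq_zero_of_hasSubgaussianMGF_zero] with ω hω
      simp [hω, hp.ne']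
    rw [hX0]
    positivity
  have hc_pos : (0 : ℝ) < c := by positivity
  set t := √(p / c)
  have ht : 0 < t := by positivity
  have ht_sq : t ^ 2 = p / c := Real.sq_sqrt (by positivity)
  have hmgf {s : ℝ} (hs : s ^ 2 = p / c) : mgf X μ s ≤ √(Real.exp 1) ^ p := by
    refine (hX.mgf_le s).trans_eq ?_
    rw [hs, mul_div_cancel₀ _ hc_pos.ne', ← Real.exp_half, ← Real.exp_mul]
    ring_nf
  have hp_div : p / t = √(p * c) := by
    rw [eq_comm, Real.sqrt_eq_iff_mul_self_eq (by positivity) (by positivity), ← sq, div_pow,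
      ht_sq]
    field_simp
  calc ∫ ω, |X ω| ^ p ∂μ
      ≤ (p / t) ^ p * (mgf X μ t + mgf X μ (-t)) :=
        integral_abs_rpow_le_mgf_add ht hp.le (hX.integrable_exp_mul t) (hX.integrable_exp_mul (-t))
    _ ≤ (p / t) ^ p * (√(Real.exp 1) ^ p + √(Real.exp 1) ^ p) := by
        gcongr
        exacts [hmgf ht_sq, hmgf (by rw [neg_sq, ht_sq])]
    _ = 2 * √(Real.exp 1 * p * c) ^ p := by
        rw [hp_div, mul_assoc (Real.exp 1), Real.sqrt_mul (Real.exp_nonneg 1),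
          Real.mul_rpow (by positivity) (by positivity)]
        ring

lemma eLpNorm_le_of_hasSubgaussianMGF {X : Ω → ℝ} {c : NNReal} {p : ℝ}
    (hX : HasSubgaussianMGF X c μ) (hp : 0 < p) :
    eLpNorm X (ENNReal.ofReal p) μ ≤ ENNReal.ofReal (subgaussianMomentConst p * √c) := by
  have hbound : 0 ≤ subgaussianMomentConst p * √c :=
    mul_nonneg (subgaussianMomentConst_nonneg p) (Real.sqrt_nonneg _)
  rw [MemLp.eLpNorm_eq_integral_rpow_norm (by simpa using hp) ENNReal.ofReal_ne_top
    (hX.memLp p.toNNReal), ENNReal.toReal_ofReal hp.le]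
  refine ENNReal.ofReal_le_ofReal ((Real.rpow_inv_le_iff_of_pos ?_ hbound hp).2 ?_)
  · exact integral_nonneg fun ω => by positivity
  · exact integral_abs_rpow_le_of_hasSubgaussianMGF hX hp

lemma eLpNorm_sum_sub_integral_le {ι : Type*} {X : ι → Ω → ℝ} {s : Finset ι} {b : ι → ℝ} {p : ℝ}
    (h_indep : iIndepFun X μ) (h_meas : ∀ i ∈ s, AEMeasurable (X i) μ)
    (h_bdd : ∀ i ∈ s, ∀ᵐ ω ∂μ, |X i ω| ≤ b i) (hp : 0 < p) :
    eLpNorm (fun ω => ∑ i ∈ s, (X i ω - μ[X i])) (ENNReal.ofReal p) μ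
      ≤ ENNReal.ofReal (subgaussianMomentConst p * √(∑ i ∈ s, b i ^ 2)) := by
  have : IsProbabilityMeasure μ := h_indep.isProbabilityMeasure
  have h_centered : iIndepFun (fun i ω => X i ω - μ[X i]) μ :=
    h_indep.comp (fun i x => x - ∫ ω, X i ω ∂μ) fun i => measurable_id.sub_const _
  have h_subG : ∀ i ∈ s, HasSubgaussianMGF (fun ω => X i ω - μ[X i])
      ((‖b i - -b i‖₊ / 2) ^ 2) μ := fun i hi =>
    hasSubgaussianMGF_of_mem_Icc (h_meas i hi) ((h_bdd i hi).mono fun ω h => abs_le.1 h)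
  have h_param (i : ι) : (‖b i - -b i‖ / 2) ^ 2 = b i ^ 2 := by
    rw [div_pow, Real.norm_eq_abs, sq_abs]
    ring
  simpa only [NNReal.coe_sum, NNReal.coe_pow, NNReal.coe_div, coe_nnnorm, NNReal.coe_ofNat,
    h_param] using
    eLpNorm_le_of_hasSubgaussianMGF (HasSubgaussianMGF.sum_of_iIndepFun h_centered h_subG) hp

end Subgaussian

section Ratio

lemma abs_sum_mul_le {ι : Type*} {s : Finset ι} {w h : ι → ℝ} {H : ℝ} (hw : ∀ i ∈ s, 0 ≤ w i)
    (hh : ∀ i ∈ s, |h i| ≤ H) : |∑ i ∈ s, w i * h i| ≤ H * ∑ i ∈ s, w i := by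
  rw [Finset.mul_sum]
  refine (Finset.abs_sum_le_sum_abs _ _).trans (Finset.sum_le_sum fun i hi => ?_)
  rw [abs_mul, abs_of_nonneg (hw i hi), mul_comm]
  exact mul_le_mul_of_nonneg_right (hh i hi) (hw i hi)

lemma abs_div_sub_div_le {a c u v H : ℝ} (hc : 0 < c) (hH : 0 ≤ H) (huv : |u| ≤ H * v) :
    |a / c - u / v| ≤ c⁻¹ * (|u - a| + H * |v - c|) := by
  have hratio : |u / v| ≤ H := by
    rw [abs_div]
    exact div_le_of_le_mul₀ (abs_nonneg v) hH
      (huv.trans (mul_le_mul_of_nonneg_left (le_abs_self v) hH))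
  -- Valid also for `v = 0`, which forces `u = 0`.
  have hcancel : u / v * v = u := div_mul_cancel_of_imp fun hv => by simpa [hv] using huv
  have hsplit : a / c - u / v = c⁻¹ * (u / v * (v - c) - (u - a)) := by
    rw [eq_inv_mul_iff_mul_eq₀ hc.ne', mul_sub c, mul_div_cancel₀ _ hc.ne']
    linear_combination -hcancel
  rw [hsplit, abs_mul, abs_of_pos (inv_pos.2 hc)]
  gcongr
  calc |u / v * (v - c) - (u - a)| ≤ |u / v * (v - c)| + |u - a| := abs_sub _ _
    _ ≤ |u - a| + H * |v - c| := by
        rw [abs_mul, add_comm]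
        gcongr

lemma eLpNorm_div_sub_div_le {Ω : Type*} [MeasurableSpace Ω] {μ : Measure Ω} {U V : Ω → ℝ}
    {a c H : ℝ} {p : ℝ≥0∞} (hU : AEStronglyMeasurable U μ) (hV : AEStronglyMeasurable V μ)
    (hc : 0 < c) (hH : 0 ≤ H) (hUV : ∀ ω, |U ω| ≤ H * V ω) (hp : 1 ≤ p) :
    eLpNorm (fun ω => a / c - U ω / V ω) p μ ≤
      ENNReal.ofReal c⁻¹ * (eLpNorm (fun ω => U ω - a) p μ
        + ENNReal.ofReal H * eLpNorm (fun ω => V ω - c) p μ) := by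
  have hUa : AEStronglyMeasurable (fun ω => ‖U ω - a‖) μ :=
    (hU.sub aestronglyMeasurable_const).norm
  have hVc : AEStronglyMeasurable (fun ω => ‖V ω - c‖) μ :=
    (hV.sub aestronglyMeasurable_const).norm
  calc eLpNorm (fun ω => a / c - U ω / V ω) p μ
      ≤ eLpNorm (c⁻¹ • ((fun ω => ‖U ω - a‖) + H • fun ω => ‖V ω - c‖)) p μ :=
        eLpNorm_mono_real fun ω => abs_div_sub_div_le hc hH (hUV ω)
    _ = ENNReal.ofReal c⁻¹ * eLpNorm ((fun ω => ‖U ω - a‖) + H • fun ω => ‖V ω - c‖) p μ := by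
        rw [eLpNorm_const_smul, Real.enorm_of_nonneg (inv_nonneg.2 hc.le)]
    _ ≤ ENNReal.ofReal c⁻¹ * (eLpNorm (fun ω => ‖U ω - a‖) p μ
          + eLpNorm (H • fun ω => ‖V ω - c‖) p μ) := by
        gcongr
        exact eLpNorm_add_le hUa (hVc.const_smul H) hp
    _ = _ := by
        rw [eLpNorm_const_smul, Real.enorm_of_nonneg hH, eLpNorm_norm, eLpNorm_norm]

end Ratio

section SelfNormalized

variable {ι E : Type*} [Fintype ι] [MeasurableSpace E] {P : Measure E}
  [IsProbabilityMeasure P]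

/-- The self-normalised importance sampling estimator of `P(w * h) / P(w)` from a sample `ω` of
`P`. It is `0` when all the weights vanish. -/
def selfNormalizedMean (w h : E → ℝ) (ω : ι → E) : ℝ :=
  (∑ i, w (ω i) * h (ω i)) / ∑ i, w (ω i)

lemma eLpNorm_sum_eval_sub_le {φ : E → ℝ} {b p : ℝ} (hφ : AEMeasurable φ P)
    (hb : ∀ᵐ e ∂P, |φ e| ≤ b) (hp : 0 < p) :
    eLpNorm (fun ω : ι → E => ∑ i, φ (ω i) - Fintype.card ι * ∫ e, φ e ∂P) (ENNReal.ofReal p)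
        (Measure.pi fun _ => P)
      ≤ ENNReal.ofReal (subgaussianMomentConst p * (b * √(Fintype.card ι))) := by
  have hb0 : 0 ≤ b := by
    obtain ⟨e, he⟩ := hb.exists
    exact (abs_nonneg _).trans he
  have h_eval (i : ι) : MeasurePreserving (Function.eval i) (Measure.pi fun _ : ι => P) P :=
    measurePreserving_eval (fun _ : ι => P) i
  have h_mean (i : ι) : ∫ ω : ι → E, φ (ω i) ∂(Measure.pi fun _ => P) = ∫ e, φ e ∂P :=
    integral_comp_eval hφ.aestronglyMeasurable
  have h_sqrt : √(∑ _i : ι, b ^ 2) = b * √(Fintype.card ι) := by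
    rw [Finset.sum_const, nsmul_eq_mul, Finset.card_univ, Real.sqrt_mul (by positivity),
      Real.sqrt_sq hb0, mul_comm]
  have h_sum := eLpNorm_sum_sub_integral_le (s := Finset.univ) (iIndepFun_pi fun _ : ι => hφ)
    (fun i _ => hφ.comp_quasiMeasurePreserving (h_eval i).quasiMeasurePreserving)
    (fun i _ => (h_eval i).quasiMeasurePreserving.ae hb) hp
  rw [h_sqrt] at h_sum
  simpa only [h_mean, Finset.sum_sub_distrib, Finset.sum_const, Finset.card_univ,
    nsmul_eq_mul] using h_sum

theorem eLpNorm_sub_selfNormalizedMean_le [Nonempty ι] {w h : E → ℝ} {W H p : ℝ}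
    (hw_meas : Measurable w) (hh_meas : Measurable h) (hw_nonneg : ∀ e, 0 ≤ w e)
    (hw_le : ∀ e, w e ≤ W) (hh_le : ∀ e, |h e| ≤ H) (hw_int : 0 < ∫ e, w e ∂P) (hp : 1 ≤ p) :
    eLpNorm (fun ω : ι → E => (∫ e, w e * h e ∂P) / (∫ e, w e ∂P) - selfNormalizedMean w h ω)
        (ENNReal.ofReal p) (Measure.pi fun _ => P)
      ≤ ENNReal.ofReal
          (2 * subgaussianMomentConst p * W / (∫ e, w e ∂P) * H / √(Fintype.card ι)) := by
  obtain ⟨e₀⟩ := nonempty_of_isProbabilityMeasure P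
  have hW : 0 ≤ W := (hw_nonneg e₀).trans (hw_le e₀)
  have hH : 0 ≤ H := (abs_nonneg _).trans (hh_le e₀)
  have hK := subgaussianMomentConst_nonneg p
  have hp_pos : 0 < p := zero_lt_one.trans_le hp
  have hn : (0 : ℝ) < Fintype.card ι := Nat.cast_pos.2 Fintype.card_pos
  have hw_abs (e : E) : |w e| ≤ W := (abs_of_nonneg (hw_nonneg e)).trans_le (hw_le e)
  have hwh_abs (e : E) : |w e * h e| ≤ W * H :=
    (abs_mul _ _).trans_le (mul_le_mul (hw_abs e) (hh_le e) (abs_nonneg _) hW)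
  have h_num := eLpNorm_sum_eval_sub_le (ι := ι) (hw_meas.mul hh_meas).aemeasurable
    (ae_of_all P hwh_abs) hp_pos
  have h_den := eLpNorm_sum_eval_sub_le (ι := ι) hw_meas.aemeasurable (ae_of_all P hw_abs) hp_pos
  set n : ℝ := (Fintype.card ι : ℝ)
  set K := subgaussianMomentConst p
  set a := ∫ e, w e * h e ∂P
  set c := ∫ e, w e ∂P
  calc _ = eLpNorm (fun ω : ι → E => n * a / (n * c) - selfNormalizedMean w h ω)
          (ENNReal.ofReal p) (Measure.pi fun _ => P) := by
        rw [mul_div_mul_left a c hn.ne']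
    _ ≤ ENNReal.ofReal (n * c)⁻¹ * (ENNReal.ofReal (K * (W * H * √n))
          + ENNReal.ofReal H * ENNReal.ofReal (K * (W * √n))) := by
        refine (eLpNorm_div_sub_div_le ?_ ?_ (mul_pos hn hw_int) hH
          (fun _ => abs_sum_mul_le (fun _ _ => hw_nonneg _) fun _ _ => hh_le _)
          (ENNReal.one_le_ofReal.2 hp)).trans (by gcongr; exact h_num)
        all_goals exact Measurable.aestronglyMeasurable (by fun_prop)
    _ = ENNReal.ofReal (2 * K * W / c * H / √n) := by
        rw [← ENNReal.ofReal_mul hH, ← ENNReal.ofReal_add (by positivity) (by positivity),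
          ← ENNReal.ofReal_mul (by positivity)]
        congr 1
        field_simp
        rw [Real.sq_sqrt hn.le]
        ring

end SelfNormalized

section PiKernel

variable {ι α : Type*} {β : ι → Type*} [Fintype ι] [MeasurableSpace α]
  [∀ i, MeasurableSpace (β i)]

lemma measurable_measure_pi_kernel (κ : ∀ i, Kernel α (β i)) [∀ i, IsMarkovKernel (κ i)] :
    Measurable fun a => Measure.pi fun i => κ i a := by
  refine .measure_of_isPiSystem_of_isProbabilityMeasure generateFrom_pi.symm isPiSystem_pi ?_
  rintro _ ⟨s, hs, rfl⟩
  simp only [Measure.pi_pi]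
  exact Finset.measurable_prod _ fun i _ => (κ i).measurable_coe (hs i (Set.mem_univ i))

/-- The finite product of Markov kernels out of a common source: given `a`, the coordinates are
independent with laws `κ i a`. -/
def piKernel (κ : ∀ i, Kernel α (β i)) [∀ i, IsMarkovKernel (κ i)] : Kernel α (∀ i, β i) where
  toFun a := Measure.pi fun i => κ i a
  measurable' := measurable_measure_pi_kernel κ

variable (κ : ∀ i, Kernel α (β i)) [∀ i, IsMarkovKernel (κ i)]

lemma piKernel_apply (a : α) : piKernel κ a = Measure.pi fun i => κ i a := rfl

instance instIsMarkovKernelPiKernel : IsMarkovKernel (piKernel κ) where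
  isProbabilityMeasure a := by
    rw [piKernel_apply]
    infer_instance

lemma map_eval_piKernel (i : ι) : (piKernel κ).map (Function.eval i) = κ i := by
  ext1 a
  rw [Kernel.map_apply _ (measurable_pi_apply i), piKernel_apply]
  exact (measurePreserving_eval (fun i => κ i a) i).map_eq

end PiKernel

section Nested

variable {𝒳 𝒵 : Type*}

lemma likeM_nonneg {g : 𝒳 × 𝒵 → ℝ} (hg : ∀ w, 0 ≤ g w) {M : ℕ} (s : 𝒳 × (Fin M → 𝒵)) :
    0 ≤ likeM g s :=
  mul_nonneg (by positivity) (Finset.sum_nonneg fun _ _ => hg _)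

lemma likeM_le {g : 𝒳 × 𝒵 → ℝ} {C : ℝ} (hg : ∀ w, g w ≤ C) {M : ℕ} (hM : M ≠ 0)
    (s : 𝒳 × (Fin M → 𝒵)) : likeM g s ≤ C := by
  rw [likeM, inv_mul_le_iff₀ (by positivity)]
  simpa using Finset.sum_le_card_nsmul Finset.univ _ C fun j _ => hg (s.1, s.2 j)

lemma nisEstimator_eq_selfNormalizedMean (g : 𝒳 × 𝒵 → ℝ) (f : 𝒳 → ℝ) {N M : ℕ}
    (ω : Fin N → 𝒳 × (Fin M → 𝒵)) :
    nisEstimator g f ω = selfNormalizedMean (likeM g) (f ∘ Prod.fst) ω := rfl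

variable [MeasurableSpace 𝒳] [MeasurableSpace 𝒵]

lemma measurable_likeM {g : 𝒳 × 𝒵 → ℝ} (hg : Measurable g) (M : ℕ) :
    Measurable fun s : 𝒳 × (Fin M → 𝒵) => likeM g s := by
  unfold likeM
  fun_prop

variable (π₀ : Measure 𝒳) (κ : Kernel 𝒳 𝒵) [IsMarkovKernel κ]

lemma nestedLawOne_eq_compProd [SFinite π₀] (M : ℕ) :
    nestedLawOne π₀ κ M = π₀ ⊗ₘ piKernel fun _ : Fin M => κ := by
  rw [Measure.compProd_eq_comp_prod, nestedLawOne]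
  congr 1 with x : 1
  rw [Kernel.prod_apply, Kernel.id_apply, piKernel_apply]

instance instIsProbabilityMeasureNestedLawOne [IsProbabilityMeasure π₀] (M : ℕ) :
    IsProbabilityMeasure (nestedLawOne π₀ κ M) := by
  rw [nestedLawOne_eq_compProd]
  infer_instance

lemma measurePreserving_nestedLawOne_eval [SFinite π₀] {M : ℕ} (j : Fin M) :
    MeasurePreserving (Prod.map id (Function.eval j)) (nestedLawOne π₀ κ M) (π₀ ⊗ₘ κ) where
  measurable := by fun_prop
  map_eq := by
    rw [nestedLawOne_eq_compProd, ← Measure.compProd_map (measurable_pi_apply j),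
      map_eval_piKernel]

lemma integral_likeM_mul [SFinite π₀] {g : 𝒳 × 𝒵 → ℝ} {f : 𝒳 → ℝ}
    (hgf : Integrable (fun w => g w * f w.1) (π₀ ⊗ₘ κ)) {M : ℕ} (hM : M ≠ 0) :
    ∫ s, likeM g s * f s.1 ∂(nestedLawOne π₀ κ M) =
      ∫ x, f x * (∫ z, g (x, z) ∂(κ x)) ∂π₀ := by
  have h_sample (j : Fin M) : Integrable (fun s => g (s.1, s.2 j) * f s.1) (nestedLawOne π₀ κ M) :=
    (measurePreserving_nestedLawOne_eval π₀ κ j).integrable_comp_of_integrable hgf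
  have h_mean (j : Fin M) : ∫ s, g (s.1, s.2 j) * f s.1 ∂(nestedLawOne π₀ κ M) =
      ∫ w, g w * f w.1 ∂(π₀ ⊗ₘ κ) := by
    have h_map := measurePreserving_nestedLawOne_eval π₀ κ j
    rw [← h_map.map_eq] at hgf ⊢
    exact (integral_map h_map.measurable.aemeasurable hgf.aestronglyMeasurable).symm
  calc ∫ s, likeM g s * f s.1 ∂(nestedLawOne π₀ κ M)
      = (M : ℝ)⁻¹ * ∑ j : Fin M, ∫ s, g (s.1, s.2 j) * f s.1 ∂(nestedLawOne π₀ κ M) := by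
        simp only [likeM, mul_assoc, Finset.sum_mul]
        rw [integral_const_mul, integral_finsetSum _ fun j _ => h_sample j]
    _ = ∫ w, g w * f w.1 ∂(π₀ ⊗ₘ κ) := by
        simp only [h_mean, Finset.sum_const, Finset.card_univ, Fintype.card_fin, nsmul_eq_mul]
        exact inv_mul_cancel_left₀ (Nat.cast_ne_zero.2 hM) _
    _ = ∫ x, f x * (∫ z, g (x, z) ∂(κ x)) ∂π₀ := by
        simp only [Measure.integral_compProd hgf, integral_mul_const, mul_comm (f _)]

lemma integral_likeM [SFinite π₀] {g : 𝒳 × 𝒵 → ℝ} (hg : Integrable g (π₀ ⊗ₘ κ)) {M : ℕ}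
    (hM : M ≠ 0) :
    ∫ s, likeM g s ∂(nestedLawOne π₀ κ M) = ∫ x, (∫ z, g (x, z) ∂(κ x)) ∂π₀ := by
  simpa using integral_likeM_mul π₀ κ (f := fun _ => 1) (by simpa using hg) hM

end Nested

theorem stmt0_general {𝒳 𝒵 : Type*} [MeasurableSpace 𝒳] [MeasurableSpace 𝒵]
    (π₀ : Measure 𝒳) [IsProbabilityMeasure π₀]
    (κ : Kernel 𝒳 𝒵) [IsMarkovKernel κ]
    {g : 𝒳 × 𝒵 → ℝ} (hg_meas : Measurable g)
    (hg_nonneg : ∀ w, 0 ≤ g w) {Cg : ℝ} (hCg : ∀ w, g w ≤ Cg)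
    (hl_pos : 0 < ∫ x, (∫ z, g (x, z) ∂(κ x)) ∂π₀)
    {p : ℝ} (hp : 1 ≤ p) {N M : ℕ} (hN : 1 ≤ N) (hM : 1 ≤ M)
    {f : 𝒳 → ℝ} (hf : Measurable f) {Cf : ℝ} (hCf : ∀ x, |f x| ≤ Cf) :
    eLpNorm
        (fun ω : Fin N → 𝒳 × (Fin M → 𝒵) =>
          (∫ x, f x * (∫ z, g (x, z) ∂(κ x)) ∂π₀) / (∫ x, (∫ z, g (x, z) ∂(κ x)) ∂π₀)
            - nisEstimator g f ω)
        (ENNReal.ofReal p) (nestedLaw π₀ κ N M)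
      ≤ ENNReal.ofReal
          (2 * subgaussianMomentConst p * Cg / (∫ x, (∫ z, g (x, z) ∂(κ x)) ∂π₀) * Cf / √N) := by
  have hM0 : M ≠ 0 := Nat.one_le_iff_ne_zero.1 hM
  have : Nonempty (Fin N) := ⟨⟨0, hN⟩⟩
  have hg_int : Integrable g (π₀ ⊗ₘ κ) :=
    .of_bound hg_meas.aestronglyMeasurable Cg <| ae_of_all _ fun w => by
      rw [Real.norm_of_nonneg (hg_nonneg w)]
      exact hCg w
  have hgf_int : Integrable (fun w => g w * f w.1) (π₀ ⊗ₘ κ) :=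
    hg_int.mul_bdd (c := Cf) (hf.comp measurable_fst).aestronglyMeasurable
      (ae_of_all _ fun w => hCf w.1)
  rw [← integral_likeM π₀ κ hg_int hM0] at hl_pos ⊢
  rw [← integral_likeM_mul π₀ κ hgf_int hM0]
  simp only [nisEstimator_eq_selfNormalizedMean, nestedLaw]
  simpa only [Fintype.card_fin, Function.comp_apply] using
    eLpNorm_sub_selfNormalizedMean_le (ι := Fin N) (measurable_likeM hg_meas M)
      (hf.comp measurable_fst) (likeM_nonneg hg_nonneg) (likeM_le hCg hM0)
      (fun s => hCf s.1) hl_pos hp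

/-- If the likelihood `g_y` is strictly positive and bounded, then for
every `p ≥ 1` there is a finite constant `C`, independent of `N`, `M` and `f`, such that
for every bounded measurable `f`, `E[|π(f) − π^{N,M}(f)|^p]^{1/p} ≤ C‖f‖_∞/√N`. -/
theorem stmt0 {𝒳 𝒵 : Type*} [MeasurableSpace 𝒳] [MeasurableSpace 𝒵]
    (π₀ : Measure 𝒳) [IsProbabilityMeasure π₀]
    (κ : Kernel 𝒳 𝒵) [IsMarkovKernel κ]
    (g : 𝒳 × 𝒵 → ℝ) (hg_meas : Measurable g)
    (hg_pos : ∀ w, 0 < g w) (Cg : ℝ) (hCg : ∀ w, g w ≤ Cg)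
    (hl_pos : 0 < ∫ x, (∫ z, g (x, z) ∂(κ x)) ∂π₀)
    (p : ℝ) (hp : 1 ≤ p) :
    ∃ C : ℝ, 0 ≤ C ∧
      ∀ (N M : ℕ), 1 ≤ N → 1 ≤ M →
        ∀ (f : 𝒳 → ℝ), Measurable f → ∀ (Cf : ℝ), (∀ x, |f x| ≤ Cf) →
          eLpNorm
            (fun ω : Fin N → 𝒳 × (Fin M → 𝒵) =>
              (∫ x, f x * (∫ z, g (x, z) ∂(κ x)) ∂π₀) /
                  (∫ x, (∫ z, g (x, z) ∂(κ x)) ∂π₀)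
                - nisEstimator g f ω)
            (ENNReal.ofReal p) (nestedLaw π₀ κ N M)
          ≤ ENNReal.ofReal (C * Cf / Real.sqrt N) := by
  obtain ⟨w⟩ := nonempty_of_isProbabilityMeasure (π₀ ⊗ₘ κ)
  have hC : 0 ≤ 2 * subgaussianMomentConst p * Cg / ∫ x, (∫ z, g (x, z) ∂(κ x)) ∂π₀ :=
    div_nonneg (mul_nonneg (mul_nonneg zero_le_two (subgaussianMomentConst_nonneg p))
      ((hg_pos w).le.trans (hCg w))) hl_pos.le
  exact ⟨_, hC, fun N M hN hM f hf Cf hCf =>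
    stmt0_general π₀ κ hg_meas (fun w => (hg_pos w).le) hCg hl_pos hp hN hM hf hCf⟩

end
end

section
/- In the linear Gaussian model, for every r > 0 and every y ∈ ℝ^{d_y} with ‖y − μ_y^{d_z}‖ ≤ r, the normalizing constant π₀(l_y^{d_z}) satisfies 1/π₀(l_y^{d_z}) ≤ ( [ (σ₁(A) + σ₁(B^{d_z})·σ₁(H^{d_z}))²·λ₁(Σ_x) + σ₁(B^{d_z})²·λ₁(Q^{d_z}) + λ₁(R) ]^{d_y} / |R| )^{1/2} · exp( (1/2)·d_y³·r²·λ_min(R)⁻¹ ). -/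
/-! In the Loewner order the covariance is squeezed between two quantities, `R ≤ Σ_y ≤ c • 1`, where
`c` is the bracketed constant: a conjugation `T M Tᵀ` costs at most a factor `σ₁(T)²`. The upper
bound controls `|Σ_y|` by `c ^ d_y`; the lower bound and antitonicity of inversion give
`Σ_y⁻¹ ≤ R⁻¹ ≤ λ_min(R)⁻¹ • 1`, which controls the exponent by `r² / λ_min(R)`. -/

open Matrix

noncomputable section

/-- The largest (real) eigenvalue of a real matrix: the supremum of its real spectrum. -/
def maxEig {n : ℕ} (A : Matrix (Fin n) (Fin n) ℝ) : ℝ :=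
  sSup (spectrum ℝ A)

/-- The smallest (real) eigenvalue of a real matrix: the infimum of its real spectrum. -/
def minEig {n : ℕ} (A : Matrix (Fin n) (Fin n) ℝ) : ℝ :=
  sInf (spectrum ℝ A)

/-- The largest singular value of a real matrix, i.e. its ℓ²→ℓ² operator norm. -/
def sigma1 {m n : ℕ} (A : Matrix (Fin m) (Fin n) ℝ) : ℝ :=
  ‖LinearMap.toContinuousLinearMap (Matrix.toEuclideanLin A)‖

section Loewner

open scoped MatrixOrder ComplexOrder Matrix.Norms.L2Operator

variable {𝕜 m n : Type*} [RCLike 𝕜]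

theorem posDef_of_le {R S : Matrix n n 𝕜} (hR : R.PosDef) (h : R ≤ S) : S.PosDef := by
  simpa using hR.add_posSemidef (Matrix.le_iff.1 h)

variable [Fintype n]

theorem mul_mul_conjTranspose_mono [Finite m] {M N : Matrix n n 𝕜} (h : M ≤ N) (T : Matrix m n 𝕜) :
    T * M * Tᴴ ≤ T * N * Tᴴ := by
  simpa only [Matrix.le_iff, Matrix.mul_sub, Matrix.sub_mul] using
    (Matrix.le_iff.1 h).mul_mul_conjTranspose_same T

variable [Fintype m] [DecidableEq n]

theorem le_algebraMap_l2_opNorm {M : Matrix n n 𝕜} (hM : M.IsHermitian) :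
    M ≤ algebraMap ℝ _ ‖M‖ := by
  cases isEmpty_or_nonempty n
  · exact (Subsingleton.elim _ _).le
  refine le_algebraMap_of_spectrum_le (fun t ht ↦ ?_) hM.isSelfAdjoint
  have ht' : (t : 𝕜) ∈ spectrum 𝕜 M := spectrum.algebraMap_mem 𝕜 ht
  calc t ≤ ‖(t : 𝕜)‖ := by simpa using le_abs_self t
    _ ≤ ‖M‖ := spectrum.norm_le_norm_of_mem ht'

theorem mul_conjTranspose_self_le_algebraMap_l2_opNorm_sq [DecidableEq m] (T : Matrix m n 𝕜) :
    T * Tᴴ ≤ algebraMap ℝ _ (‖T‖ ^ 2) := by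
  have norm_sq : ‖T * Tᴴ‖ = ‖T‖ ^ 2 := by
    simpa [sq, l2_opNorm_conjTranspose] using l2_opNorm_conjTranspose_mul_self Tᴴ
  exact norm_sq ▸ le_algebraMap_l2_opNorm (isHermitian_mul_conjTranspose_self T)

theorem mul_mul_conjTranspose_le_algebraMap [DecidableEq m] {M : Matrix n n 𝕜} {c : ℝ}
    (hc : 0 ≤ c) (h : M ≤ algebraMap ℝ _ c) (T : Matrix m n 𝕜) :
    T * M * Tᴴ ≤ algebraMap ℝ _ (‖T‖ ^ 2 * c) :=
  calc T * M * Tᴴ ≤ T * algebraMap ℝ _ c * Tᴴ := mul_mul_conjTranspose_mono h T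
    _ = c • (T * Tᴴ) := by simp [Algebra.algebraMap_eq_smul_one]
    _ ≤ c • algebraMap ℝ _ (‖T‖ ^ 2) :=
      smul_le_smul_of_nonneg_left (mul_conjTranspose_self_le_algebraMap_l2_opNorm_sq T) hc
    _ = algebraMap ℝ _ (‖T‖ ^ 2 * c) := by
      rw [mul_comm, map_mul, ← Algebra.smul_def]

theorem det_le_pow_of_le_algebraMap {S : Matrix n n 𝕜} {c : ℝ} (hS : S.PosSemidef)
    (h : S ≤ algebraMap ℝ _ c) : S.det ≤ (c : 𝕜) ^ Fintype.card n := by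
  have eigenvalues_le (i : n) : hS.isHermitian.eigenvalues i ≤ c :=
    (le_algebraMap_iff_spectrum_le hS.isHermitian.isSelfAdjoint).1 h _
      (hS.isHermitian.eigenvalues_mem_spectrum_real i)
  rw [hS.isHermitian.det_eq_prod_eigenvalues]
  norm_cast
  calc ∏ i, hS.isHermitian.eigenvalues i ≤ ∏ _i : n, c :=
        Finset.prod_le_prod (fun i _ ↦ hS.eigenvalues_nonneg i) fun i _ ↦ eigenvalues_le i
    _ = c ^ Fintype.card n := by rw [Finset.prod_const, Finset.card_univ]

theorem dotProduct_mulVec_le_of_le_algebraMap {M : Matrix n n 𝕜} {c : ℝ}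
    (h : M ≤ algebraMap ℝ _ c) (v : n → 𝕜) : star v ⬝ᵥ M *ᵥ v ≤ (c : 𝕜) * (star v ⬝ᵥ v) := by
  have form_nonneg := (Matrix.le_iff.1 h).dotProduct_mulVec_nonneg v
  rwa [Matrix.sub_mulVec, dotProduct_sub, sub_nonneg, Algebra.algebraMap_eq_smul_one,
    Matrix.smul_mulVec, Matrix.one_mulVec, dotProduct_smul, RCLike.real_smul_eq_coe_mul]
    at form_nonneg

-- `S - R` and `R⁻¹ - S⁻¹` are the two Schur complements of the block matrix `[S, 1; 1, R⁻¹]`.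
theorem inv_le_inv_of_posDef_of_le {R S : Matrix n n 𝕜} (hR : R.PosDef) (h : R ≤ S) :
    S⁻¹ ≤ R⁻¹ := by
  have hS := posDef_of_le hR h
  let := hS.isUnit.invertible
  let := hR.inv.isUnit.invertible
  have block : (fromBlocks S 1 1ᴴ R⁻¹).PosSemidef := by
    rw [PosDef.fromBlocks₂₂ S 1 hR.inv]
    simpa [nonsing_inv_nonsing_inv _ hR.det_pos.ne'.isUnit] using Matrix.le_iff.1 h
  rw [PosDef.fromBlocks₁₁ 1 R⁻¹ hS] at block
  simpa [Matrix.le_iff] using block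

theorem inv_le_algebraMap_inv {S : Matrix n n 𝕜} {c : ℝ} (hc : 0 < c)
    (h : algebraMap ℝ _ c ≤ S) : S⁻¹ ≤ algebraMap ℝ _ c⁻¹ := by
  have hcS : (algebraMap ℝ (Matrix n n 𝕜) c).PosDef := by
    simpa [Algebra.algebraMap_eq_smul_one] using PosDef.one.smul hc
  have inv_scalar : (algebraMap ℝ (Matrix n n 𝕜) c)⁻¹ = algebraMap ℝ _ c⁻¹ :=
    Matrix.inv_eq_right_inv (by rw [← map_mul, mul_inv_cancel₀ hc.ne', map_one])
  exact inv_scalar ▸ inv_le_inv_of_posDef_of_le hcS h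

end Loewner

section ExtremeEigenvalues

open scoped MatrixOrder Matrix.Norms.L2Operator

variable {m n k : ℕ}

theorem sigma1_eq_l2_opNorm (T : Matrix (Fin m) (Fin n) ℝ) : sigma1 T = ‖T‖ := rfl

theorem sigma1_add_mul_le (A : Matrix (Fin m) (Fin n) ℝ) (B : Matrix (Fin m) (Fin k) ℝ)
    (H : Matrix (Fin k) (Fin n) ℝ) : sigma1 (A + B * H) ≤ sigma1 A + sigma1 B * sigma1 H := by
  simp only [sigma1_eq_l2_opNorm]
  exact (norm_add_le _ _).trans (add_le_add_right (l2_opNorm_mul B H) _)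

theorem le_algebraMap_maxEig {M : Matrix (Fin n) (Fin n) ℝ} (hM : M.IsHermitian) :
    M ≤ algebraMap ℝ _ (maxEig M) :=
  le_algebraMap_of_spectrum_le (fun _ ht ↦ le_csSup finite_real_spectrum.bddAbove ht)
    hM.isSelfAdjoint

theorem algebraMap_minEig_le {M : Matrix (Fin n) (Fin n) ℝ} (hM : M.IsHermitian) :
    algebraMap ℝ _ (minEig M) ≤ M :=
  algebraMap_le_of_le_spectrum (fun _ ht ↦ csInf_le finite_real_spectrum.bddBelow ht)
    hM.isSelfAdjoint

theorem maxEig_nonneg {M : Matrix (Fin n) (Fin n) ℝ} (hM : M.PosSemidef) : 0 ≤ maxEig M :=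
  Real.sSup_nonneg fun _ ht ↦ spectrum_nonneg_of_nonneg hM.nonneg ht

theorem minEig_nonneg {M : Matrix (Fin n) (Fin n) ℝ} (hM : M.PosSemidef) : 0 ≤ minEig M :=
  Real.sInf_nonneg fun _ ht ↦ spectrum_nonneg_of_nonneg hM.nonneg ht

theorem minEig_pos [NeZero n] {M : Matrix (Fin n) (Fin n) ℝ} (hM : M.PosDef) :
    0 < minEig M := by
  have spectrum_eq := hM.isHermitian.spectrum_real_eq_range_eigenvalues
  have attained : minEig M ∈ spectrum ℝ M :=
    (spectrum_eq ▸ Set.range_nonempty _ : (spectrum ℝ M).Nonempty).csInf_mem finite_real_spectrum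
  obtain ⟨i, hi⟩ := spectrum_eq ▸ attained
  exact hi ▸ hM.eigenvalues_pos i

theorem inv_minEig_le_pow_mul {M : Matrix (Fin n) (Fin n) ℝ} (hM : M.PosSemidef) (j : ℕ) :
    (minEig M)⁻¹ ≤ (n : ℝ) ^ j * (minEig M)⁻¹ := by
  rcases n.eq_zero_or_pos with rfl | hn
  · -- The spectrum is empty, so `minEig M = sInf ∅ = 0` and both sides vanish.
    simp [minEig, spectrum.of_subsingleton]
  · exact le_mul_of_one_le_left (inv_nonneg.2 (minEig_nonneg hM))
      (one_le_pow₀ (Nat.one_le_cast.2 hn))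

theorem inv_le_algebraMap_inv_minEig {R S : Matrix (Fin n) (Fin n) ℝ} (hR : R.PosDef)
    (h : R ≤ S) : S⁻¹ ≤ algebraMap ℝ _ (minEig R)⁻¹ := by
  cases n
  · exact (Subsingleton.elim _ _).le
  · exact inv_le_algebraMap_inv (minEig_pos hR) ((algebraMap_minEig_le hR.isHermitian).trans h)

theorem mul_mul_transpose_le_algebraMap_maxEig {M : Matrix (Fin n) (Fin n) ℝ}
    (hM : M.PosSemidef) {T : Matrix (Fin m) (Fin n) ℝ} {s : ℝ} (hs : sigma1 T ≤ s) :
    T * M * Tᵀ ≤ algebraMap ℝ _ (s ^ 2 * maxEig M) := by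
  have norm_le : sigma1 T ^ 2 * maxEig M ≤ s ^ 2 * maxEig M :=
    mul_le_mul_of_nonneg_right (pow_le_pow_left₀ (norm_nonneg _) hs 2) (maxEig_nonneg hM)
  rw [← conjTranspose_eq_transpose_of_trivial]
  exact (mul_mul_conjTranspose_le_algebraMap (maxEig_nonneg hM)
    (le_algebraMap_maxEig hM.isHermitian) T).trans (algebraMap_mono _ norm_le)

end ExtremeEigenvalues

section LinearGaussian

open scoped MatrixOrder

/-- The covariance `Σ_y = T Σ_x Tᵀ + B Q Bᵀ + R` of the output of the linear Gaussian model. -/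
def outputCov {m n k : Type*} [Fintype n] [Fintype k] (T : Matrix m n ℝ) (B : Matrix m k ℝ)
    (Sx : Matrix n n ℝ) (Q : Matrix k k ℝ) (R : Matrix m m ℝ) : Matrix m m ℝ :=
  T * Sx * Tᵀ + B * Q * Bᵀ + R

/-- The normalizing constant `π₀(l_y)`, as a function of the noise covariance `R`, the output
covariance `S = Σ_y` and the deviation `v = y - μ_y` of the observation from its mean. -/
def normalizingConst {n : Type*} [Fintype n] [DecidableEq n] (R S : Matrix n n ℝ) (v : n → ℝ) :
    ℝ :=
  Real.sqrt (R.det / S.det) * Real.exp (-(1 / 2) * (v ⬝ᵥ S⁻¹ *ᵥ v))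

theorem le_outputCov {m n k : Type*} [Finite m] [Fintype n] [Fintype k] {Sx : Matrix n n ℝ}
    {Q : Matrix k k ℝ} (hSx : Sx.PosSemidef) (hQ : Q.PosSemidef) (T : Matrix m n ℝ)
    (B : Matrix m k ℝ) (R : Matrix m m ℝ) : R ≤ outputCov T B Sx Q R := by
  have hT := (hSx.mul_mul_conjTranspose_same T).nonneg
  have hB := (hQ.mul_mul_conjTranspose_same B).nonneg
  exact le_add_of_nonneg_left (add_nonneg hT hB)

theorem outputCov_le_algebraMap {dx dy dz : ℕ} {Sx : Matrix (Fin dx) (Fin dx) ℝ}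
    {Q : Matrix (Fin dz) (Fin dz) ℝ} {R : Matrix (Fin dy) (Fin dy) ℝ}
    {T : Matrix (Fin dy) (Fin dx) ℝ} {s : ℝ} (hSx : Sx.PosSemidef) (hQ : Q.PosSemidef)
    (hR : R.IsHermitian) (hs : sigma1 T ≤ s) (B : Matrix (Fin dy) (Fin dz) ℝ) :
    outputCov T B Sx Q R ≤
      algebraMap ℝ _ (s ^ 2 * maxEig Sx + sigma1 B ^ 2 * maxEig Q + maxEig R) := by
  rw [map_add, map_add]
  exact add_le_add (add_le_add (mul_mul_transpose_le_algebraMap_maxEig hSx hs)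
    (mul_mul_transpose_le_algebraMap_maxEig hQ le_rfl)) (le_algebraMap_maxEig hR)

theorem inv_normalizingConst_le {n : Type*} [Fintype n] [DecidableEq n] {R S : Matrix n n ℝ}
    {a b : ℝ} (hR : 0 ≤ R.det) (hS : S.PosSemidef) (hSa : S ≤ algebraMap ℝ _ a)
    (hSb : S⁻¹ ≤ algebraMap ℝ _ b) (v : n → ℝ) :
    (normalizingConst R S v)⁻¹ ≤
      Real.sqrt (a ^ Fintype.card n / R.det) * Real.exp (1 / 2 * (b * (v ⬝ᵥ v))) := by
  have det_le : S.det ≤ a ^ Fintype.card n := det_le_pow_of_le_algebraMap hS hSa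
  have form_le : v ⬝ᵥ S⁻¹ *ᵥ v ≤ b * (v ⬝ᵥ v) := dotProduct_mulVec_le_of_le_algebraMap hSb v
  calc (normalizingConst R S v)⁻¹
      = Real.sqrt (S.det / R.det) * Real.exp (1 / 2 * (v ⬝ᵥ S⁻¹ *ᵥ v)) := by
        rw [normalizingConst, mul_inv, ← Real.sqrt_inv, inv_div, ← Real.exp_neg, neg_mul, neg_neg]
    _ ≤ _ := by gcongr

theorem stmt15_general {dx dy dz : ℕ}
    (A : Matrix (Fin dy) (Fin dx) ℝ) (B : Matrix (Fin dy) (Fin dz) ℝ)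
    (H : Matrix (Fin dz) (Fin dx) ℝ)
    {Sx : Matrix (Fin dx) (Fin dx) ℝ} {Q : Matrix (Fin dz) (Fin dz) ℝ}
    {R : Matrix (Fin dy) (Fin dy) ℝ}
    (hSx : Sx.PosSemidef) (hQ : Q.PosSemidef) (hR : R.PosDef)
    (μx : Fin dx → ℝ) {r : ℝ} {y : Fin dy → ℝ}
    (hy : Real.sqrt (∑ i, (y i - ((A + B * H) *ᵥ μx) i) ^ 2) ≤ r) :
    (normalizingConst R (outputCov (A + B * H) B Sx Q R) (y - (A + B * H) *ᵥ μx))⁻¹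
      ≤ Real.sqrt
            (((sigma1 A + sigma1 B * sigma1 H) ^ 2 * maxEig Sx
                + sigma1 B ^ 2 * maxEig Q + maxEig R) ^ dy / R.det) *
          Real.exp ((1 / 2) * r ^ 2 * (minEig R)⁻¹) := by
  set v := y - (A + B * H) *ᵥ μx
  have hv : v ⬝ᵥ v ≤ r ^ 2 := by
    simpa [dotProduct, v, sq] using (Real.sqrt_le_iff.1 hy).2
  have R_le := le_outputCov hSx hQ (A + B * H) B R
  have le_c := outputCov_le_algebraMap hSx hQ hR.isHermitian (sigma1_add_mul_le A B H) B
  have := minEig_nonneg hR.posSemidef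
  refine (inv_normalizingConst_le hR.det_pos.le (posDef_of_le hR R_le).posSemidef le_c
    (inv_le_algebraMap_inv_minEig hR R_le) v).trans ?_
  rw [Fintype.card_fin, mul_comm _ (v ⬝ᵥ v), ← mul_assoc]
  gcongr

end LinearGaussian

/-- In the linear Gaussian model (`T = A + BH`,
`μ_y = Tμ_x`, `Σ_y = TΣ_xTᵀ + BQBᵀ + R`,
`π₀(l_y) = √(|R|/|Σ_y|)·exp{−(1/2)(y−μ_y)ᵀΣ_y⁻¹(y−μ_y)}`), for every `r > 0` and every
`y` with `‖y − μ_y‖ ≤ r`,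
`1/π₀(l_y) ≤ ([ (σ₁(A)+σ₁(B)σ₁(H))²λ₁(Σ_x) + σ₁(B)²λ₁(Q) + λ₁(R) ]^{d_y}/|R|)^{1/2}
  · exp((1/2)·d_y³·r²·λ_min(R)⁻¹)`. -/
theorem stmt15 {dx dy dz : ℕ}
    (A : Matrix (Fin dy) (Fin dx) ℝ) (B : Matrix (Fin dy) (Fin dz) ℝ)
    (H : Matrix (Fin dz) (Fin dx) ℝ)
    (Sx : Matrix (Fin dx) (Fin dx) ℝ) (Q : Matrix (Fin dz) (Fin dz) ℝ)
    (R : Matrix (Fin dy) (Fin dy) ℝ)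
    (hSx : Sx.PosDef) (hQ : Q.PosDef) (hR : R.PosDef)
    (hT : ((A + B * H) * Sx * (A + B * H)ᵀ).PosDef)
    (hBQ : (B * Q * Bᵀ).PosDef)
    (μx : Fin dx → ℝ) (r : ℝ) (hr : 0 < r) (y : Fin dy → ℝ)
    (hy : Real.sqrt (∑ i, (y i - ((A + B * H) *ᵥ μx) i) ^ 2) ≤ r) :
    (Real.sqrt (R.det / ((A + B * H) * Sx * (A + B * H)ᵀ + B * Q * Bᵀ + R).det) *
          Real.exp (-(1 / 2) *
            ((y - (A + B * H) *ᵥ μx) ⬝ᵥ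
              ((A + B * H) * Sx * (A + B * H)ᵀ + B * Q * Bᵀ + R)⁻¹ *ᵥ
                (y - (A + B * H) *ᵥ μx))))⁻¹
      ≤ Real.sqrt
            (((sigma1 A + sigma1 B * sigma1 H) ^ 2 * maxEig Sx
                + sigma1 B ^ 2 * maxEig Q + maxEig R) ^ dy / R.det) *
          Real.exp ((1 / 2) * (dy : ℝ) ^ 3 * r ^ 2 * (minEig R)⁻¹) := by
  refine (stmt15_general A B H hSx.posSemidef hQ.posSemidef hR μx hy).trans
    (mul_le_mul_of_nonneg_left (Real.exp_le_exp.2 ?_) (Real.sqrt_nonneg _))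
  linarith [mul_le_mul_of_nonneg_left (inv_minEig_le_pow_mul hR.posSemidef 3) (sq_nonneg r)]

end
end
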